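/- arXiv:1802.05303 — 3 statements merged into one kernel-verified Lean document; each statement's English description precedes it below -/
import Mathlib

section
/- Assume there exists a set N ⊆ [0,1] of positive Lebesgue outer measure such that for every function g : N → ℕ^ℕ there exists h : ℕ → ℕ with g(x) ≤* h for all x ∈ N (i.e. non(N) < 𝔟). Let 𝒮 be a set of sequences F = ⟨f_n⟩_{n∈ℕ} of functions f_n : [0,1] → [0,1], let P be an arbitrary predicate assigning to each F ∈ 𝒮 and each set A ⊆ [0,1] a proposition P(F,A), and let o : 𝒮 → ([0,1] → ℕ^ℕ) be a function such that for every F ∈ 𝒮 and every A ⊆ [0,1], if the set {o(F)(x) : x ∈ A} is bounded in ℕ^ℕ then P(F,A) holds. Then for every F ∈ 𝒮 and every ε > 0 there exists A ⊆ [0,1] with m*(A) ≥ 1 − ε such that P(F,A) holds. -/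
open MeasureTheory Filter Set

/-- A set of functions `ℕ → ℕ` is bounded if a single `h : ℕ → ℕ` dominates
all of its members everywhere. -/
def BddNatFun (S : Set (ℕ → ℕ)) : Prop :=
  ∃ h : ℕ → ℕ, ∀ f ∈ S, ∀ n, f n ≤ h n

/-- A measurable set of reals invariant under rational translations that is not null in `(0, 1]`
is conull in `(0, 1]`. -/
theorem ae_mem_of_rat_invariant {G : Set ℝ} (hG : MeasurableSet G)
    (hinv : ∀ (q : ℚ) (x : ℝ), (q : ℝ) + x ∈ G ↔ x ∈ G)
    (hpos : volume.restrict (Ioc (0 : ℝ) 1) G ≠ 0) :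
    ∀ᵐ x ∂volume.restrict (Ioc (0 : ℝ) 1), x ∈ G := by
  let S : Set UnitAddCircle := (fun x : ℝ => (x : UnitAddCircle)) '' G
  have hS : ∀ x : ℝ, (x : UnitAddCircle) ∈ S ↔ x ∈ G := by
    refine fun x => ⟨?_, fun hx => ⟨x, hx, rfl⟩⟩
    rintro ⟨y, hy, hyx⟩
    obtain ⟨n, hn⟩ := AddSubgroup.mem_zmultiples_iff.1 (QuotientAddGroup.eq.1 hyx)
    have hx : x = ((n : ℚ) : ℝ) + y := by
      simp only [zsmul_eq_mul, mul_one] at hn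
      push_cast
      linarith
    rw [hx, hinv]
    exact hy
  have hpre : (fun x : ℝ => (x : UnitAddCircle)) ⁻¹' S = G := Set.ext hS
  have hSm : MeasurableSet S := measurableSet_quotient.2 (hpre.symm ▸ hG)
  have hmp := AddCircle.measurePreserving_mk (1 : ℝ) 0
  rw [zero_add] at hmp
  have hdense : Dense {g : UnitAddCircle | (g +ᵥ ·) ⁻¹' S = S} := by
    have hd : DenseRange (fun q : ℚ => ((q : ℝ) : UnitAddCircle)) :=
      (QuotientAddGroup.mk_surjective.denseRange).comp Rat.denseRange_cast
        (AddCircle.continuous_mk' 1)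
    refine hd.mono ?_
    rintro _ ⟨q, rfl⟩
    ext z
    obtain ⟨x, rfl⟩ := QuotientAddGroup.mk_surjective z
    change (((q : ℝ) + x : ℝ) : UnitAddCircle) ∈ S ↔ (x : UnitAddCircle) ∈ S
    rw [hS, hS, hinv]
  rcases eventuallyConst_set.1
    (aeconst_of_dense_setOfPred_preimage_vadd_eq (μ := volume) hSm.nullMeasurableSet hdense) with h | h
  · filter_upwards [hmp.quasiMeasurePreserving.ae h] with x hx using (hS x).1 hx
  · refine absurd (measure_eq_zero_iff_ae_notMem.2 ?_) hpos
    filter_upwards [hmp.quasiMeasurePreserving.ae h] with x hx using fun hxG => hx ((hS x).2 hxG)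

/-- The rational translates of a subset of `[0, 1]` of positive outer measure have full outer
measure in `[0, 1]`. -/
theorem one_le_volume_rat_translates {N : Set ℝ} (hN : N ⊆ Icc 0 1) (hpos : 0 < volume N) :
    1 ≤ volume ({y : ℝ | ∃ q : ℚ, (q : ℝ) + y ∈ N} ∩ Icc 0 1) := by
  set E : Set ℝ := {y : ℝ | ∃ q : ℚ, (q : ℝ) + y ∈ N}
  set B : Set ℝ := toMeasurable volume (E ∩ Icc 0 1)
  have hB : MeasurableSet B := measurableSet_toMeasurable _ _
  let G : Set ℝ := ⋂ q : ℚ, ((q : ℝ) + ·) ⁻¹' (B ∪ (Icc 0 1)ᶜ)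
  have hG : MeasurableSet G :=
    .iInter fun q => (measurable_const_add (q : ℝ)) (hB.union measurableSet_Icc.compl)
  have hEG : E ⊆ G := by
    rintro y ⟨q, hq⟩
    refine mem_iInter.2 fun r => ?_
    by_cases hr : (r : ℝ) + y ∈ Icc (0 : ℝ) 1
    · refine Or.inl (subset_toMeasurable _ _ ⟨⟨q - r, ?_⟩, hr⟩)
      push_cast
      rwa [← add_assoc, sub_add_cancel]
    · exact Or.inr hr
  have hinv : ∀ (q : ℚ) (x : ℝ), (q : ℝ) + x ∈ G ↔ x ∈ G := by
    have key : ∀ (q : ℚ) (x : ℝ), x ∈ G → (q : ℝ) + x ∈ G := by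
      intro q x hx
      refine mem_iInter.2 fun r => ?_
      have := mem_iInter.1 hx (r + q)
      rwa [mem_preimage, Rat.cast_add, add_assoc] at this
    refine fun q x => ⟨fun h => ?_, key q x⟩
    simpa using key (-q) _ h
  have hGpos : volume.restrict (Ioc (0 : ℝ) 1) G ≠ 0 := by
    rw [restrict_Ioc_eq_restrict_Icc, Measure.restrict_apply hG]
    have hNG : N ⊆ G ∩ Icc 0 1 := fun x hx => ⟨hEG ⟨0, by simpa using hx⟩, hN hx⟩
    exact (hpos.trans_le (measure_mono hNG)).ne'
  have hae := ae_mem_of_rat_invariant hG hinv hGpos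
  have hle : volume (Ioc (0 : ℝ) 1) ≤ volume B := by
    rw [ae_restrict_iff' measurableSet_Ioc] at hae
    refine measure_mono_ae ?_
    filter_upwards [hae] with x hx hxI
    have h0 := mem_iInter.1 (hx hxI) 0
    simp only [mem_preimage, Rat.cast_zero, zero_add] at h0
    exact h0.resolve_right (not_not.2 (Ioc_subset_Icc_self hxI))
  rw [measure_toMeasurable] at hle
  simpa using hle

theorem exists_eventually_dominating_rat_translates {N : Set ℝ}
    (hN : ∀ g : ℝ → ℕ → ℕ, ∃ h : ℕ → ℕ, ∀ x ∈ N, ∀ᶠ n in atTop, g x n ≤ h n)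
    (f : ℝ → ℕ → ℕ) :
    ∃ h : ℕ → ℕ, ∀ y ∈ {y : ℝ | ∃ q : ℚ, (q : ℝ) + y ∈ N}, ∀ᶠ n in atTop, f y n ≤ h n := by
  obtain ⟨e, he⟩ := exists_surjective_nat ℚ
  obtain ⟨h, hh⟩ := hN fun x n => (Finset.range (n + 1)).sup fun i => f (x - (e i : ℝ)) n
  refine ⟨h, ?_⟩
  rintro y ⟨q, hq⟩
  obtain ⟨i, rfl⟩ := he q
  filter_upwards [hh _ hq, eventually_ge_atTop i] with n hn hin
  refine le_trans ?_ hn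
  have := Finset.le_sup (f := fun j => f ((e i : ℝ) + y - (e j : ℝ)) n)
    (Finset.mem_range.2 (Nat.lt_succ_of_le hin))
  simpa using this

theorem exists_le_add_of_eventually_le {f h : ℕ → ℕ} (hf : ∀ᶠ n in atTop, f n ≤ h n) :
    ∃ k, ∀ n, f n ≤ h n + k := by
  obtain ⟨m, hm⟩ := eventually_atTop.1 hf
  refine ⟨(Finset.range m).sup f, fun n => ?_⟩
  rcases lt_or_ge n m with hn | hn
  · exact (Finset.le_sup (Finset.mem_range.2 hn)).trans (Nat.le_add_left _ _)
  · exact (hm n hn).trans (Nat.le_add_right _ _)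

theorem stmt_3
    (hyp : ∃ N : Set ℝ, N ⊆ Set.Icc 0 1 ∧ 0 < volume N ∧
      ∀ g : ℝ → ℕ → ℕ, ∃ h : ℕ → ℕ, ∀ x ∈ N, ∀ᶠ n in atTop, g x n ≤ h n)
    (𝒮 : Set (ℕ → ℝ → ℝ))
    (h𝒮 : ∀ F ∈ 𝒮, ∀ n : ℕ, ∀ x ∈ Set.Icc (0 : ℝ) 1, F n x ∈ Set.Icc (0 : ℝ) 1)
    (P : (ℕ → ℝ → ℝ) → Set ℝ → Prop)
    (o : (ℕ → ℝ → ℝ) → ℝ → ℕ → ℕ)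
    (ho : ∀ F ∈ 𝒮, ∀ A ⊆ Set.Icc (0 : ℝ) 1, BddNatFun (o F '' A) → P F A) :
    ∀ F ∈ 𝒮, ∀ ε : ℝ, 0 < ε →
      ∃ A ⊆ Set.Icc (0 : ℝ) 1, ENNReal.ofReal (1 - ε) ≤ volume A ∧ P F A := by
  intro F hF ε hε
  obtain ⟨N, hN, hpos, hdom⟩ := hyp
  obtain ⟨h, hh⟩ := exists_eventually_dominating_rat_translates hdom (o F)
  let A : ℕ → Set ℝ := fun k => {y ∈ Icc (0 : ℝ) 1 | ∀ n, o F y n ≤ h n + k}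
  have hA : Monotone A := fun k l hkl y hy =>
    ⟨hy.1, fun n => (hy.2 n).trans (Nat.add_le_add_left hkl _)⟩
  have hlt : ENNReal.ofReal (1 - ε) < ⨆ k, volume (A k) := by
    rw [← hA.measure_iUnion]
    refine lt_of_lt_of_le ?_ ((one_le_volume_rat_translates hN hpos).trans (measure_mono ?_))
    · rw [← ENNReal.ofReal_one]
      exact (ENNReal.ofReal_lt_ofReal_iff one_pos).2 (by linarith)
    · rintro y ⟨hy, hyI⟩
      obtain ⟨k, hk⟩ := exists_le_add_of_eventually_le (hh y hy)
      exact mem_iUnion.2 ⟨k, hyI, hk⟩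
  obtain ⟨k, hk⟩ := lt_iSup_iff.1 hlt
  have hsub : A k ⊆ Icc 0 1 := fun y hy => hy.1
  refine ⟨A k, hsub, hk.le, ho F hF _ hsub ⟨fun n => h n + k, ?_⟩⟩
  rintro _ ⟨y, hy, rfl⟩
  exact hy.2
end

section
/- Assume that every subset of ℝ of cardinality less than the continuum is Lebesgue-null (i.e. non(N) = 𝔠), and that there exists a set Z ⊆ ℕ^ℕ of cardinality continuum such that every meagre subset of Z has cardinality less than the continuum (a 𝔠-Lusin set). Let φ be a lower semicontinuous submeasure on ℕ with lim_{n→∞} φ(ℕ \ [0,n)) > 0 (so that I = Exh(φ) is a proper ideal). Then there exist a sequence f_m : [0,1] → [0,1] converging to 0 I-pointwise on [0,1], and ε > 0, such that for every A ⊆ [0,1] with m*(A) ≥ 1 − ε, the sequence does not converge to 0 equi-ideally on A. -/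
open MeasureTheory Filter Set ENNReal

/-- A lower semicontinuous submeasure on `ℕ`. -/
def IsLSCSubmeasure (φ : Set ℕ → ℝ≥0∞) : Prop :=
  φ ∅ = 0 ∧ (∀ A B : Set ℕ, φ A ≤ φ (A ∪ B)) ∧
    (∀ A B : Set ℕ, φ (A ∪ B) ≤ φ A + φ B) ∧
    ∀ A : Set ℕ, Tendsto (fun n => φ (A ∩ Set.Iio n)) atTop (nhds (φ A))

/-- `f` converges to `0` `Exh(φ)`-pointwise on `A`. -/
def ExhPointwise (φ : Set ℕ → ℝ≥0∞) (f : ℕ → ℝ → ℝ) (A : Set ℝ) : Prop :=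
  ∀ δ : ℝ, 0 < δ → ∀ x ∈ A,
    ∃ k : ℕ, φ ({m | δ ≤ f m x} \ Set.Iio k) < ENNReal.ofReal δ

/-- `f` converges to `0` equi-ideally (w.r.t. `φ`) on `A`. -/
def ExhEqui (φ : Set ℕ → ℝ≥0∞) (f : ℕ → ℝ → ℝ) (A : Set ℝ) : Prop :=
  ∀ δ : ℝ, 0 < δ →
    ∃ k : ℕ, ∀ x ∈ A, φ ({m | δ ≤ f m x} \ Set.Iio k) < ENNReal.ofReal δ

theorem IsLSCSubmeasure.mono {φ : Set ℕ → ℝ≥0∞} (hφ : IsLSCSubmeasure φ) {A B : Set ℕ}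
    (h : A ⊆ B) : φ A ≤ φ B := by
  simpa [union_eq_self_of_subset_left h] using hφ.2.1 A B

/-- A set of functions `ℕ → ℕ` bounded everywhere by a single function is meagre. -/
theorem BddNatFun.isMeagre {S : Set (ℕ → ℕ)} (hS : BddNatFun S) : IsMeagre S := by
  obtain ⟨h, hh⟩ := hS
  have hopen : IsOpen {g : ℕ → ℕ | ∃ n, h n < g n} := by
    rw [ofPred_exists]
    exact isOpen_iUnion fun n => isOpen_lt continuous_const (continuous_apply n)
  have hdense : Dense {g : ℕ → ℕ | ∃ n, h n < g n} := by
    intro g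
    have hlim : Tendsto (fun n => Function.update g n (h n + 1)) atTop (nhds g) := by
      rw [tendsto_pi_nhds]
      intro i
      refine tendsto_const_nhds.congr' ?_
      filter_upwards [eventually_gt_atTop i] with n hn
      rw [Function.update_of_ne hn.ne]
    exact mem_closure_of_tendsto hlim (Eventually.of_forall fun n => ⟨n, by simp⟩)
  refine mem_of_superset (residual_of_dense_open hopen hdense) ?_
  rintro g ⟨n, hn⟩ hg
  exact (hh g hg n).not_gt hn

/-- Below the limit value of the tails, every tail has a finite segment of larger submeasure. -/
theorem IsLSCSubmeasure.exists_segment {φ : Set ℕ → ℝ≥0∞} (hφ : IsLSCSubmeasure φ) {c : ℝ≥0∞}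
    (hc : c < ⨅ n : ℕ, φ (Set.Iio n)ᶜ) (k : ℕ) : ∃ l, c < φ (Iio l \ Iio k) := by
  obtain ⟨l, hl⟩ :=
    ((hφ.2.2.2 (Iio k)ᶜ).eventually_const_lt (hc.trans_le (iInf_le _ k))).exists
  exact ⟨l, by rwa [sdiff_eq, inter_comm]⟩

open Classical in
/-- The value `c / (n + 1)` for the least `n` with `m < u n`, and `0` if there is none. -/
noncomputable def scaledFirstIndex (c : ℝ) (u : ℕ → ℕ) (m : ℕ) : ℝ :=
  if h : ∃ n, m < u n then c / (Nat.find h + 1) else 0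

theorem scaledFirstIndex_mem_Icc {c : ℝ} (hc0 : 0 ≤ c) (hc1 : c ≤ 1) (u : ℕ → ℕ) (m : ℕ) :
    scaledFirstIndex c u m ∈ Icc (0 : ℝ) 1 := by
  unfold scaledFirstIndex
  split_ifs with h
  · exact ⟨by positivity, div_le_one_of_le₀ (hc1.trans (by simp)) (by positivity)⟩
  · simp

theorem le_scaledFirstIndex {c : ℝ} (hc0 : 0 ≤ c) {u : ℕ → ℕ} {m n : ℕ} (h : m < u n) :
    c / (n + 1) ≤ scaledFirstIndex c u m := by
  classical
  have hex : ∃ n, m < u n := ⟨n, h⟩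
  rw [scaledFirstIndex, dif_pos hex]
  have : (Nat.find hex : ℝ) ≤ n := mod_cast Nat.find_min' hex h
  gcongr

theorem finite_setOf_le_scaledFirstIndex (c : ℝ) (u : ℕ → ℕ) {δ : ℝ} (hδ : 0 < δ) :
    {m | δ ≤ scaledFirstIndex c u m}.Finite := by
  obtain ⟨N, hN⟩ := exists_nat_gt (c / δ)
  refine ((finite_Iio N).biUnion fun n _ => finite_Iio (u n)).subset fun m hm => ?_
  classical
  rw [mem_ofPred_eq, scaledFirstIndex] at hm
  split_ifs at hm with h
  · refine mem_biUnion (x := Nat.find h) ?_ (Nat.find_spec h)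
    have hpos : (0 : ℝ) < Nat.find h + 1 := by positivity
    rw [le_div_iff₀ hpos, mul_comm, ← le_div_iff₀ hδ] at hm
    have : (Nat.find h : ℝ) < N := by linarith
    exact mod_cast this
  · exact absurd hm hδ.not_ge

theorem stmt_10
    (hnon : ∀ s : Set ℝ, Cardinal.mk s < Cardinal.continuum → volume s = 0)
    (hLusin : ∃ Z : Set (ℕ → ℕ), Cardinal.mk Z = Cardinal.continuum ∧
      ∀ M ⊆ Z, IsMeagre M → Cardinal.mk M < Cardinal.continuum)
    (φ : Set ℕ → ℝ≥0∞) (hφ : IsLSCSubmeasure φ)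
    (hproper : 0 < ⨅ n : ℕ, φ (Set.Iio n)ᶜ) :
    ∃ f : ℕ → ℝ → ℝ,
      (∀ m : ℕ, ∀ x ∈ Set.Icc (0 : ℝ) 1, f m x ∈ Set.Icc (0 : ℝ) 1) ∧
      ExhPointwise φ f (Set.Icc 0 1) ∧
      ∃ ε : ℝ, 0 < ε ∧
        ∀ A ⊆ Set.Icc (0 : ℝ) 1, ENNReal.ofReal (1 - ε) ≤ volume A →
          ¬ ExhEqui φ f A := by
  obtain ⟨Z, hZ, hZM⟩ := hLusin
  obtain ⟨e⟩ : Nonempty (ℝ ≃ Z) := Cardinal.eq.1 (Cardinal.mk_real.trans hZ.symm)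
  obtain ⟨c, hc0, hc1, hc⟩ : ∃ c : ℝ, 0 < c ∧ c ≤ 1 ∧
      ENNReal.ofReal c < ⨅ n : ℕ, φ (Set.Iio n)ᶜ := by
    obtain ⟨q, hq0, hq⟩ := ENNReal.lt_iff_exists_nnreal_btwn.1 hproper
    refine ⟨min q 1, lt_min (mod_cast hq0) one_pos, min_le_right _ _, lt_of_le_of_lt ?_ hq⟩
    exact (ENNReal.ofReal_le_ofReal (min_le_left _ _)).trans (by simp)
  choose L hL using hφ.exists_segment hc
  refine ⟨fun m x => scaledFirstIndex c (fun n => L ((e x : ℕ → ℕ) n)) m,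
    fun m x _ => scaledFirstIndex_mem_Icc hc0.le hc1 _ m, ?_, 1 / 2, by norm_num, ?_⟩
  · intro δ hδ x _
    obtain ⟨k, hk⟩ := (finite_setOf_le_scaledFirstIndex c
      (fun n => L ((e x : ℕ → ℕ) n)) hδ).bddAbove
    refine ⟨k + 1, ?_⟩
    have hsub : {m | δ ≤ scaledFirstIndex c (fun n => L ((e x : ℕ → ℕ) n)) m} ⊆ Iio (k + 1) :=
      fun m hm => Nat.lt_succ_of_le (hk hm)
    rw [sdiff_eq_empty.2 hsub, hφ.1]
    exact ENNReal.ofReal_pos.2 hδ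
  · intro A _ hvol hequi
    have hinj : Function.Injective fun x => (e x : ℕ → ℕ) :=
      Subtype.val_injective.comp e.injective
    have hbdd : BddNatFun ((fun x => (e x : ℕ → ℕ)) '' A) := by
      choose k hk using fun n : ℕ => hequi (c / (n + 1)) (by positivity)
      refine ⟨k, ?_⟩
      rintro _ ⟨x, hx, rfl⟩ n
      by_contra! hlt
      refine (hk n x hx).not_ge ?_
      have hsub : Iio (L ((e x : ℕ → ℕ) n)) ⊆
          {m | c / (n + 1) ≤ scaledFirstIndex c (fun n => L ((e x : ℕ → ℕ) n)) m} :=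
        fun m hm => le_scaledFirstIndex (u := fun n => L ((e x : ℕ → ℕ) n)) hc0.le hm
      calc ENNReal.ofReal (c / (n + 1)) ≤ ENNReal.ofReal c :=
            ENNReal.ofReal_le_ofReal (div_le_self hc0.le (by simp))
        _ ≤ φ (Iio (L ((e x : ℕ → ℕ) n)) \ Iio ((e x : ℕ → ℕ) n)) := (hL _).le
        _ ≤ _ := hφ.mono (sdiff_subset_sdiff hsub (Iio_subset_Iio hlt.le))
    have hcard := hZM _ (by rintro _ ⟨x, _, rfl⟩; exact (e x).2) hbdd.isMeagre
    rw [Cardinal.mk_image_eq hinj] at hcard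
    rw [hnon A hcard] at hvol
    norm_num at hvol
end

section
/- Assume that every subset of ℝ of cardinality less than the continuum is Lebesgue-null (i.e. non(N) = 𝔠), and that there exists a set Z ⊆ ℕ^ℕ of cardinality continuum such that every meagre subset of Z has cardinality less than the continuum (a 𝔠-Lusin set). Let C : ℕ → 𝒫(ℕ) be a nondecreasing sequence of subsets of ℕ, each with infinite complement ℕ \ C_n, generating the ideal I = {A ⊆ ℕ : A ⊆ C_k for some k}. Then there exist a sequence f_n : [0,1] → [0,1] converging to 0 I*-pointwise on [0,1], and ε > 0, such that for every A ⊆ [0,1] with m*(A) ≥ 1 − ε, the sequence does not converge to 0 I*-uniformly on A. -/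
open MeasureTheory Filter Set

/-- `f` converges to `0` `I*`-pointwise on `A`, where `I` is the ideal
generated by the nondecreasing sequence `C`. -/
def CgStarPointwise (C : ℕ → Set ℕ) (f : ℕ → ℝ → ℝ) (A : Set ℝ) : Prop :=
  ∀ x ∈ A, ∃ k : ℕ, ∃ M : Set ℕ, M.Infinite ∧ Mᶜ ⊆ C k ∧
    ∀ δ : ℝ, 0 < δ → {m : ℕ | m ∈ M ∧ δ ≤ f m x}.Finite

/-- `f` converges to `0` `I*`-uniformly on `A`, where `I` is the ideal
generated by the nondecreasing sequence `C`. -/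
def CgStarUniform (C : ℕ → Set ℕ) (f : ℕ → ℝ → ℝ) (A : Set ℝ) : Prop :=
  ∃ k : ℕ, ∃ M : Set ℕ, M.Infinite ∧ Mᶜ ⊆ C k ∧
    ∀ δ : ℝ, 0 < δ → ∃ p : ℕ, ∀ x ∈ A, ∀ m ∈ M, p ≤ m → f m x < δ

/-- The functions bounded everywhere by `h` form a nowhere dense subset of Baire space. -/
theorem isNowhereDense_Iic_baire (h : ℕ → ℕ) : IsNowhereDense (Set.Iic h) := by
  rw [isClosed_Iic.isNowhereDense_iff, Set.eq_empty_iff_forall_notMem]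
  intro z hz
  have ht : Tendsto (fun n => Function.update z n (h n + 1)) atTop (nhds z) := by
    rw [tendsto_pi_nhds]
    intro i
    refine tendsto_const_nhds.congr' ?_
    filter_upwards [eventually_gt_atTop i] with n hn
    simp [Function.update_of_ne hn.ne]
  obtain ⟨n, hn⟩ := (ht.eventually (mem_interior_iff_mem_nhds.mp hz)).exists
  have := hn n
  simp at this

open Classical in
/-- The value `1 / (j + 1)` for the least `j` with `n ≤ z j`, and `0` if there is no such `j`. -/
noncomputable def escapeValue (n : ℕ) (z : ℕ → ℕ) : ℝ :=
  if h : ∃ j, n ≤ z j then 1 / ((Nat.find h : ℝ) + 1) else 0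

theorem escapeValue_mem_Icc (n : ℕ) (z : ℕ → ℕ) : escapeValue n z ∈ Set.Icc (0 : ℝ) 1 := by
  unfold escapeValue
  split_ifs with h
  · exact ⟨Nat.one_div_pos_of_nat.le, by
      simpa using Nat.one_div_le_one_div (α := ℝ) (Nat.zero_le (Nat.find h))⟩
  · simp

theorem le_escapeValue {n j : ℕ} {z : ℕ → ℕ} (h : n ≤ z j) :
    1 / ((j : ℝ) + 1) ≤ escapeValue n z := by
  classical
  have hex : ∃ j, n ≤ z j := ⟨j, h⟩
  rw [escapeValue, dif_pos hex]
  exact Nat.one_div_le_one_div (Nat.find_min' hex h)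

theorem finite_le_escapeValue (z : ℕ → ℕ) {δ : ℝ} (hδ : 0 < δ) :
    {n : ℕ | δ ≤ escapeValue n z}.Finite := by
  classical
  obtain ⟨k, hk⟩ := exists_nat_one_div_lt hδ
  refine ((Set.finite_Iio k).biUnion fun j _ => Set.finite_Iic (z j)).subset fun n hn => ?_
  have hn' : 1 / ((k : ℝ) + 1) < escapeValue n z := hk.trans_le hn
  unfold escapeValue at hn'
  split_ifs at hn' with hex
  · have hlt : Nat.find hex < k := by
      by_contra! hle
      exact absurd hn' (Nat.one_div_le_one_div hle).not_gt
    exact Set.mem_biUnion hlt (Nat.find_spec hex)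
  · exact absurd hn' (Nat.one_div_pos_of_nat (α := ℝ) (n := k)).not_gt

/-- Uniform convergence of `escapeValue` along an infinite set of indices bounds the family. -/
theorem exists_bound_of_escapeValue_uniform {A : Set ℝ} {g : ℝ → ℕ → ℕ} {M : Set ℕ}
    (hM : M.Infinite)
    (hu : ∀ δ : ℝ, 0 < δ → ∃ p : ℕ, ∀ x ∈ A, ∀ m ∈ M, p ≤ m → escapeValue m (g x) < δ) :
    ∃ h : ℕ → ℕ, ∀ x ∈ A, g x ≤ h := by
  have key : ∀ j : ℕ, ∃ m : ℕ, ∀ x ∈ A, g x j ≤ m := by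
    intro j
    obtain ⟨p, hp⟩ := hu (1 / ((j : ℝ) + 1)) Nat.one_div_pos_of_nat
    obtain ⟨m, hmM, hpm⟩ := hM.exists_gt p
    refine ⟨m, fun x hx => ?_⟩
    by_contra! hlt
    exact (hp x hx m hmM hpm.le).not_ge (le_escapeValue hlt.le)
  choose h hh using key
  exact ⟨h, fun x hx j => hh j x hx⟩

theorem stmt_18
    (hnon : ∀ s : Set ℝ, Cardinal.mk s < Cardinal.continuum → volume s = 0)
    (hLusin : ∃ Z : Set (ℕ → ℕ), Cardinal.mk Z = Cardinal.continuum ∧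
      ∀ M ⊆ Z, IsMeagre M → Cardinal.mk M < Cardinal.continuum)
    (C : ℕ → Set ℕ) (hC : Monotone C)
    (hCinf : ∀ n : ℕ, (C n)ᶜ.Infinite) :
    ∃ f : ℕ → ℝ → ℝ,
      (∀ n : ℕ, ∀ x ∈ Set.Icc (0 : ℝ) 1, f n x ∈ Set.Icc (0 : ℝ) 1) ∧
      CgStarPointwise C f (Set.Icc 0 1) ∧
      ∃ ε : ℝ, 0 < ε ∧
        ∀ A ⊆ Set.Icc (0 : ℝ) 1, ENNReal.ofReal (1 - ε) ≤ volume A →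
          ¬ CgStarUniform C f A := by
  obtain ⟨Z, hZ, hZm⟩ := hLusin
  have hcard : Cardinal.mk (Set.Icc (0 : ℝ) 1) = Cardinal.mk Z := by
    rw [hZ, Cardinal.mk_Icc_real one_pos]
  obtain ⟨e⟩ := Cardinal.eq.mp hcard
  let g : ℝ → ℕ → ℕ := fun x => e (Set.projIcc 0 1 zero_le_one x)
  have hgZ : ∀ x, g x ∈ Z := fun x => (e _).2
  have hginj : Set.InjOn g (Set.Icc 0 1) := fun x hx y hy hxy =>
    by simpa [Set.projIcc_of_mem, hx, hy] using e.injective (Subtype.ext hxy)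
  refine ⟨fun n x => escapeValue n (g x), fun n x _ => escapeValue_mem_Icc n (g x), ?_,
    1 / 2, by norm_num, ?_⟩
  · exact fun x _ => ⟨0, Set.univ, Set.infinite_univ, by simp,
      fun δ hδ => (finite_le_escapeValue (g x) hδ).subset fun m hm => hm.2⟩
  · rintro A hA hvol ⟨k, M, hM, -, hu⟩
    obtain ⟨h, hh⟩ := exists_bound_of_escapeValue_uniform hM hu
    have hsub : g '' A ⊆ Set.Iic h := Set.image_subset_iff.mpr hh
    have hmeagre : IsMeagre (g '' A) := (isNowhereDense_Iic_baire h).isMeagre.mono hsub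
    have hlt := hZm (g '' A) (Set.image_subset_iff.mpr fun x _ => hgZ x) hmeagre
    rw [Cardinal.mk_image_eq_of_injOn g A (hginj.mono hA)] at hlt
    rw [hnon A hlt, nonpos_iff_eq_zero, ENNReal.ofReal_eq_zero] at hvol
    norm_num at hvol
end
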